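/- Let ℓ, ℓ′ ∈ ℂ with Re ℓ > 0 and Re ℓ′ < 0, and let U and U′ be open neighbourhoods of ℓ and ℓ′ respectively. Then the additive submonoid of ℂ/2iπℤ generated by the images of U ∪ U′ is all of ℂ/2iπℤ; equivalently, for every z ∈ ℂ there exist n ≥ 1, elements u_1, …, u_n ∈ U ∪ U′, and q ∈ ℤ such that z = u_1 + ⋯ + u_n + 2iπq. -/

import Mathlib

open Complex

/-- If `U, U'` are open neighbourhoods of points `ℓ, ℓ'` with `Re ℓ > 0` and
`Re ℓ' < 0`, then the additive submonoid of `ℂ/2iπℤ` generated by `U ∪ U'` is everything: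
every `z ∈ ℂ` can be written as `u_1 + ⋯ + u_n + 2iπq` with `n ≥ 1`, `u_i ∈ U ∪ U'`, `q ∈ ℤ`. -/
theorem sums_mod_two_pi_I_eq_univ
    (l l' : ℂ) (hl : 0 < l.re) (hl' : l'.re < 0)
    (U U' : Set ℂ) (hU : IsOpen U) (hU' : IsOpen U') (hlU : l ∈ U) (hl'U' : l' ∈ U') :
    ∀ z : ℂ, ∃ n : ℕ, 1 ≤ n ∧ ∃ u : Fin n → ℂ, (∀ i, u i ∈ U ∪ U') ∧
      ∃ q : ℤ, z = (∑ i, u i) + 2 * Real.pi * Complex.I * q := by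
  intro z
  obtain ⟨r₁, hr₁, hb₁⟩ := Metric.isOpen_iff.1 hU l hlU
  obtain ⟨r₂, hr₂, hb₂⟩ := Metric.isOpen_iff.1 hU' l' hl'U'
  obtain ⟨r, hr, hrr₁, hrr₂⟩ : ∃ r : ℝ, 0 < r ∧ r ≤ r₁ ∧ r ≤ r₂ :=
    ⟨min r₁ r₂, lt_min hr₁ hr₂, min_le_left _ _, min_le_right _ _⟩
  obtain ⟨b, hb⟩ : ∃ b : ℝ, b = -l'.re := ⟨_, rfl⟩
  have hb0 : 0 < b := by linarith
  have hpi := Real.pi_pos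
  obtain ⟨n₁, hn₁⟩ := exists_nat_gt ((b + 2 * Real.pi) / r)
  obtain ⟨n₂, hn₂⟩ := exists_nat_gt (z.re / l.re)
  obtain ⟨n, hn⟩ : ∃ n : ℕ, n = n₁ + n₂ := ⟨_, rfl⟩
  have hnR : (n : ℝ) = n₁ + n₂ := by rw [hn]; push_cast; rfl
  have h1 : b + 2 * Real.pi < n * r := by
    rw [div_lt_iff₀ hr] at hn₁
    have : (0 : ℝ) ≤ n₂ * r := by positivity
    rw [hnR]; linarith
  have h2 : z.re ≤ n * l.re := by
    rw [div_lt_iff₀ hl] at hn₂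
    have : (0 : ℝ) ≤ n₁ * l.re := by positivity
    rw [hnR]; linarith
  have hn0 : (0 : ℝ) < n := by
    by_contra h
    have : (n : ℝ) * r ≤ 0 := mul_nonpos_of_nonpos_of_nonneg (not_lt.1 h) hr.le
    linarith
  obtain ⟨m, hm⟩ : ∃ m : ℕ, m = ⌊(n * l.re - z.re) / b⌋₊ := ⟨_, rfl⟩
  have hm1 : (m : ℝ) * b ≤ n * l.re - z.re := by
    rw [← le_div_iff₀ hb0, hm]
    exact Nat.floor_le (div_nonneg (by linarith) hb0.le)
  have hm2 : n * l.re - z.re < ((m : ℝ) + 1) * b := by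
    rw [← div_lt_iff₀ hb0, hm]
    exact Nat.lt_floor_add_one _
  obtain ⟨y, hy⟩ : ∃ y : ℝ, y = z.im - n * l.im - m * l'.im := ⟨_, rfl⟩
  obtain ⟨q, hq⟩ : ∃ q : ℤ, q = ⌊y / (2 * Real.pi)⌋ := ⟨_, rfl⟩
  have hq1 : (q : ℝ) * (2 * Real.pi) ≤ y := by
    rw [← le_div_iff₀ (by positivity), hq]
    exact Int.floor_le _
  have hq2 : y < ((q : ℝ) + 1) * (2 * Real.pi) := by
    rw [← div_lt_iff₀ (by positivity), hq]
    exact Int.lt_floor_add_one _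
  obtain ⟨v, hv⟩ : ∃ v : ℂ, v = z - n * l - m * l' - 2 * Real.pi * Complex.I * q := ⟨_, rfl⟩
  have hvre : v.re = z.re - n * l.re + m * b := by
    rw [hv, hb]; simp; ring
  have hvim : v.im = y - q * (2 * Real.pi) := by
    rw [hv, hy]; simp; ring
  have hvn : ‖v‖ < n * r := by
    refine lt_of_le_of_lt (Complex.norm_le_abs_re_add_abs_im v) (lt_of_le_of_lt ?_ h1)
    refine add_le_add ?_ ?_
    · rw [abs_le, hvre]; constructor <;> linarith
    · rw [abs_le, hvim]; constructor <;> linarith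
  have hN : (0 : ℝ) < (n : ℝ) + m := by positivity
  obtain ⟨w, hw⟩ : ∃ w : ℂ, w = v / ((n : ℂ) + m) := ⟨_, rfl⟩
  have hNC : (n : ℂ) + m ≠ 0 := by exact_mod_cast hN.ne'
  have hwv : ((n : ℂ) + m) * w = v := by rw [hw]; field_simp
  have hwr : ‖w‖ < r := by
    have h3 : ‖(n : ℂ) + m‖ = (n : ℝ) + m := by
      have := Complex.norm_natCast (n + m)
      push_cast at this
      exact this
    rw [hw, norm_div, h3, div_lt_iff₀ hN]
    have : (0 : ℝ) ≤ m * r := by positivity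
    linarith
  have hn1 : 1 ≤ n := by exact_mod_cast hn0
  refine ⟨n + m, by omega, Fin.append (fun _ => l + w) (fun _ => l' + w), ?_, q, ?_⟩
  · intro i
    refine Fin.addCases (fun i => ?_) (fun i => ?_) i
    · rw [Fin.append_left]
      left
      apply hb₁
      simp [Metric.mem_ball, dist_eq_norm]
      linarith
    · rw [Fin.append_right]
      right
      apply hb₂
      simp [Metric.mem_ball, dist_eq_norm]
      linarith
  · rw [Fin.sum_univ_add]
    simp only [Fin.append_left, Fin.append_right, Finset.sum_const, Finset.card_univ,
      Fintype.card_fin, nsmul_eq_mul]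
    linear_combination -hwv - hv
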